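/- Suppose the item set M is partitioned into pairwise disjoint meta-goods M_1,…,M_ℓ and a set Z of objective chores with |Z| ≥ n, where each M_r is chore-maximal and the supporter sets T_r = {i ∈ N : u_i(M_r) ≥ 0} are pairwise disjoint. Then there exists an allocation of M that is both EF1 and envy-freeable. -/

import Mathlib

/-!
An allocation whose total utility cannot be increased by permuting the bundles is envy-freeable:
give agent `i` the largest weight of a path starting at `i` in the envy graph, which has no cycle of
positive weight (Halpern and Shah).

With `|Z| = q n + r` and `r < n`, a first round hands one chore each to a set `H` of `r` agents and
all meta-goods to supporters, preferring supporters in `H`. Choosing `H` and its chores optimally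
makes the result stable under permuting the bundles, and since no agent gains from meta-goods that
come with a chore, any envy disappears once a remaining chore is added to the envied bundle. Handing
out the remaining `q n` chores in `q ≥ 1` rounds, each a maximum-weight assignment of one chore per
agent, keeps both properties. In the final allocation an agent who drops the chore of the last round
is then free of envy.
-/

namespace FairDivision

open Finset

section Potential

variable {α K : Type*}

/-- The total weight of the consecutive steps of a walk, given by its list of vertices. -/
def walkWeight [AddMonoid K] (w : α → α → K) (l : List α) : K :=
  (List.zipWith w l l.tail).sum

lemma walkWeight_cons_cons [AddMonoid K] (w : α → α → K) (x y : α) (l : List α) :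
    walkWeight w (x :: y :: l) = w x y + walkWeight w (y :: l) := by
  simp [walkWeight]

lemma walkWeight_append_cons [AddMonoid K] (w : α → α → K) (i : α) (l₂ : List α) :
    ∀ l₁ : List α, walkWeight w (l₁ ++ i :: l₂) =
      walkWeight w (l₁ ++ [i]) + walkWeight w (i :: l₂)
  | [] => by simp [walkWeight]
  | [x] => by simp [walkWeight]
  | x :: y :: l₁ => by
    have ih := walkWeight_append_cons w i l₂ (y :: l₁)
    simp only [List.cons_append] at ih ⊢
    rw [walkWeight_cons_cons, walkWeight_cons_cons, ih, add_assoc]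

lemma map_formPerm_eq_rotate [DecidableEq α] {l : List α} (hl : l.Nodup) :
    l.map l.formPerm = l.rotate 1 := by
  refine List.ext_getElem (by simp) fun k hk _ => ?_
  rw [List.getElem_map, List.getElem_rotate, List.formPerm_apply_getElem l hl]

lemma walkWeight_closed_eq_sum_formPerm [Fintype α] [DecidableEq α] [AddCommMonoid K]
    {w : α → α → K} (hw : ∀ i, w i i = 0) {i : α} {l : List α} (hl : (i :: l).Nodup) :
    walkWeight w (i :: l ++ [i]) = ∑ m, w m ((i :: l).formPerm m) := by
  have hfixed : ∀ m ∉ (i :: l).toFinset, w m ((i :: l).formPerm m) = 0 := fun m hm => by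
    rw [List.formPerm_apply_of_notMem (by simpa using hm), hw]
  calc walkWeight w (i :: l ++ [i])
      = (List.zipWith w (i :: l) ((i :: l).rotate 1)).sum := by
        have hlen : (i :: l).length = (l ++ [i]).length := by simp
        simpa [walkWeight] using congrArg List.sum
          (List.zipWith_append (f := w) (l₁' := [i]) (l₂' := []) hlen)
    _ = ((i :: l).map fun m => w m ((i :: l).formPerm m)).sum := by
        rw [← map_formPerm_eq_rotate hl, List.zipWith_map_right, List.zipWith_self]
    _ = ∑ m ∈ (i :: l).toFinset, w m ((i :: l).formPerm m) := (List.sum_toFinset _ hl).symm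
    _ = ∑ m, w m ((i :: l).formPerm m) :=
        sum_subset (subset_univ _) fun m _ hm => hfixed m hm

lemma exists_nodup_walk_max [Finite α] [AddMonoid K] [LinearOrder K] (w : α → α → K) (i : α) :
    ∃ l, (i :: l).Nodup ∧ ∀ l', (i :: l').Nodup →
      walkWeight w (i :: l') ≤ walkWeight w (i :: l) := by
  cases nonempty_fintype α
  have hnodup : {l : List α | l.Nodup}.Finite :=
    Set.finite_coe_iff.mp (inferInstanceAs (Finite {l : List α // l.Nodup}))
  have hfin : {l : List α | (i :: l).Nodup}.Finite := hnodup.subset fun _ hl => hl.of_cons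
  exact Set.exists_max_image _ (fun l => walkWeight w (i :: l)) hfin ⟨[], List.nodup_singleton i⟩

theorem exists_potential_of_sum_perm_nonpos [Fintype α] [AddCommGroup K] [LinearOrder K]
    [IsOrderedAddMonoid K] {w : α → α → K} (hw : ∀ i, w i i = 0)
    (hperm : ∀ σ : Equiv.Perm α, ∑ i, w i (σ i) ≤ 0) :
    ∃ p : α → K, (∀ i, 0 ≤ p i) ∧ ∀ i j, w i j + p j ≤ p i := by
  classical
  choose path hnodup hmax using exists_nodup_walk_max w
  refine ⟨fun i => walkWeight w (i :: path i), fun i => ?_, fun i j => ?_⟩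
  · simpa [walkWeight] using hmax i [] (by simp)
  rw [← walkWeight_cons_cons]
  by_cases hi : i ∈ j :: path j
  · obtain ⟨l₁, l₂, hsplit⟩ := List.append_of_mem hi
    have hnd : (l₁ ++ i :: l₂).Nodup := hsplit ▸ hnodup j
    have hcycle : walkWeight w (i :: l₁ ++ [i]) ≤ 0 := by
      rw [walkWeight_closed_eq_sum_formPerm hw (by grind)]
      exact hperm _
    calc walkWeight w (i :: j :: path j)
        = walkWeight w (i :: l₁ ++ [i]) + walkWeight w (i :: l₂) := by
          rw [hsplit, ← List.cons_append, walkWeight_append_cons]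
      _ ≤ 0 + walkWeight w (i :: path i) :=
          add_le_add hcycle (hmax i l₂ hnd.of_append_right)
      _ = walkWeight w (i :: path i) := zero_add _
  · exact hmax i _ (List.nodup_cons.mpr ⟨hi, hnodup j⟩)

end Potential

section Optimization

variable {α β K : Type*}

lemma exists_embedding_forall_sum_le [Fintype α] [Fintype β] [AddCommMonoid K] [LinearOrder K]
    (w : α → β → K) (h : Fintype.card α ≤ Fintype.card β) :
    ∃ a : α ↪ β, ∀ e : α ↪ β, ∑ i, w i (e i) ≤ ∑ i, w i (a i) := by
  have : Nonempty (α ↪ β) := Function.Embedding.nonempty_of_card_le h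
  exact Finite.exists_max fun a : α ↪ β => ∑ i, w i (a i)

variable [AddCommGroup K] [LinearOrder K] [IsOrderedAddMonoid K]

lemma le_of_forall_embedding_sum_le {w : α → β → K} {H : Finset α} {a : α ↪ β}
    (ha : ∀ e : α ↪ β, ∑ i ∈ H, w i (e i) ≤ ∑ i ∈ H, w i (a i))
    {i : α} (hi : i ∈ H) {c : β} (hc : ∀ k ∈ H, a k ≠ c) : w i c ≤ w i (a i) := by
  classical
  have hrest : ∑ k ∈ H.erase i, w k (a.setValue i c k) = ∑ k ∈ H.erase i, w k (a k) :=
    sum_congr rfl fun k hk => by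
      rw [Function.Embedding.setValue_eq_of_ne (ne_of_mem_erase hk) (hc k (mem_of_mem_erase hk))]
  have hle := ha (a.setValue i c)
  rw [← add_sum_erase H _ hi, ← add_sum_erase H (fun k => w k (a k)) hi, hrest,
    Function.Embedding.setValue_eq] at hle
  exact le_of_add_le_add_right hle

lemma sum_add_nonpos_of_pairwise {x : β → K} {c : K} (hc : c ≤ 0) (hxc : ∀ s, x s + c ≤ 0)
    (hx : ∀ r s, r ≠ s → 0 ≤ x r → x s ≤ 0) (P : Finset β) : ∑ s ∈ P, x s + c ≤ 0 := by
  classical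
  by_cases hP : ∃ r ∈ P, 0 ≤ x r
  · obtain ⟨r, hr, hr0⟩ := hP
    have hrest : ∑ s ∈ P.erase r, x s ≤ 0 :=
      sum_nonpos fun s hs => hx r s (ne_of_mem_erase hs).symm hr0
    rw [← add_sum_erase P x hr]
    calc x r + ∑ s ∈ P.erase r, x s + c = x r + c + ∑ s ∈ P.erase r, x s := add_right_comm ..
      _ ≤ 0 := add_nonpos (hxc r) hrest
  · push Not at hP
    exact add_nonpos (sum_nonpos fun s hs => (hP s hs).le) hc

lemma sum_add_nonpos_of_insert_nonpos {ι : Type*} [DecidableEq ι] {v : ι → K}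
    {M : β → Finset ι} {c : ι} (hcM : ∀ s, c ∉ M s) (hc : v c ≤ 0)
    (hins : ∀ s, ∑ t ∈ insert c (M s), v t ≤ 0)
    (hM : ∀ r s, r ≠ s → 0 ≤ ∑ t ∈ M r, v t → ∑ t ∈ M s, v t ≤ 0) (P : Finset β) :
    ∑ s ∈ P, ∑ t ∈ M s, v t + v c ≤ 0 :=
  sum_add_nonpos_of_pairwise hc
    (fun s => (add_comm _ _).trans_le ((sum_insert (hcM s)).symm.trans_le (hins s))) hM P

-- An owner `k` for a meta-good of value `x i` to agent `i`, lying in `H` if `H` contains a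
-- supporter; the fold is the most that `H` can gain from it, and the last clause bounds the effect
-- of a permutation of the bundles.
lemma exists_owner [Finite α] {x : α → K} (hx : ∃ i, 0 ≤ x i) (H : Finset α) :
    ∃ k, 0 ≤ x k ∧ (k ∉ H → ∀ i ∈ H, x i ≤ 0) ∧ ∀ σ : Equiv.Perm α,
      x (σ k) + H.fold max 0 x ≤ x k + (H.map σ.toEmbedding).fold max 0 x := by
  by_cases hH : ∃ i ∈ H, 0 ≤ x i
  · obtain ⟨i, hi, hi0⟩ := hH
    obtain ⟨k, hk, hkmax⟩ := H.exists_max_image x ⟨i, hi⟩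
    have hk0 : 0 ≤ x k := hi0.trans (hkmax i hi)
    refine ⟨k, hk0, fun hkH => absurd hk hkH, fun σ => ?_⟩
    have hH : H.fold max 0 x ≤ x k := (fold_max_le _).mpr ⟨hk0, hkmax⟩
    have hσH : x (σ k) ≤ (H.map σ.toEmbedding).fold max 0 x :=
      (le_fold_max _).mpr (.inr ⟨σ k, mem_map_of_mem _ hk, le_rfl⟩)
    exact (add_le_add hσH hH).trans_eq (add_comm _ _)
  · push Not at hH
    obtain ⟨i, hi0⟩ := hx
    have : Nonempty α := ⟨i⟩
    obtain ⟨k, hkmax⟩ := Finite.exists_max x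
    refine ⟨k, hi0.trans (hkmax i), fun _ i hi => (hH i hi).le, fun σ => ?_⟩
    have hH : H.fold max 0 x ≤ 0 := (fold_max_le _).mpr ⟨le_rfl, fun i hi => (hH i hi).le⟩
    have hσH : 0 ≤ (H.map σ.toEmbedding).fold max 0 x := (le_fold_max _).mpr (.inl le_rfl)
    exact add_le_add (hkmax (σ k)) (hH.trans hσH)

end Optimization

section Bundles

variable {ι α R : Type*} [DecidableEq ι] {S Y : Finset ι}

/-- The bundles `B i`, which are pairwise disjoint, and the set `Y` of items lying in none of them
together make up `S`. With `Y = ∅` this says that `B` is an allocation of `S`. -/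
structure IsPartialPartition [Fintype α] (S : Finset ι) (B : α → Finset ι) (Y : Finset ι) :
    Prop where
  pairwise_disjoint : ∀ i j, i ≠ j → Disjoint (B i) (B j)
  disjoint : ∀ i, Disjoint (B i) Y
  biUnion_union : univ.biUnion B ∪ Y = S

/-- The items of `Y` left after every agent `i ∈ H` has taken `a i`. -/
def leftover (H : Finset α) (a : α ↪ Y) : Finset ι :=
  Y \ H.image fun i => (a i : ι)

lemma mem_leftover {H : Finset α} {a : α ↪ Y} {c : ι} :
    c ∈ leftover H a ↔ c ∈ Y ∧ ∀ i ∈ H, (a i : ι) ≠ c := by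
  simp [leftover]

lemma card_leftover (H : Finset α) (a : α ↪ Y) : (leftover H a).card = Y.card - H.card := by
  have hsub : (H.image fun i => (a i : ι)) ⊆ Y := fun c hc => by
    obtain ⟨i, -, rfl⟩ := mem_image.mp hc
    exact (a i).2
  rw [leftover, card_sdiff_of_subset hsub,
    card_image_of_injective H (f := fun i => (a i : ι))
      (Subtype.val_injective.comp a.injective)]

/-- The bundles after every agent `i ∈ H` has received `a i` on top of `B i`. The values of `a`
outside `H` are irrelevant; they are there so that all `H` share one type of assignments `a`. -/
def giveItems [DecidableEq α] (H : Finset α) (a : α ↪ Y) (B : α → Finset ι) (i : α) : Finset ι :=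
  if i ∈ H then insert (a i : ι) (B i) else B i

variable {H : Finset α} {a : α ↪ Y} {B : α → Finset ι}

lemma mem_giveItems [DecidableEq α] {i : α} {t : ι} :
    t ∈ giveItems H a B i ↔ (i ∈ H ∧ t = a i) ∨ t ∈ B i := by
  unfold giveItems
  split_ifs with hi <;> simp [hi]

lemma IsPartialPartition.notMem [Fintype α] (hB : IsPartialPartition S B Y) (c : Y) (i : α) :
    (c : ι) ∉ B i :=
  fun hc => disjoint_left.mp (hB.disjoint i) hc c.2

lemma sum_giveItems [DecidableEq α] [AddCommMonoid R] (hBY : ∀ i, Disjoint (B i) Y) (f : ι → R)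
    (i : α) :
    ∑ t ∈ giveItems H a B i, f t = (if i ∈ H then f (a i) else 0) + ∑ t ∈ B i, f t := by
  unfold giveItems
  split_ifs with hi
  · exact sum_insert fun h => disjoint_left.mp (hBY i) h (a i).2
  · exact (zero_add _).symm

variable [Fintype α] [DecidableEq α]

protected lemma IsPartialPartition.giveItems (hB : IsPartialPartition S B Y) (H : Finset α)
    (a : α ↪ Y) :
    IsPartialPartition S (giveItems H a B) (leftover H a) where
  pairwise_disjoint i j hij := by
    simp only [disjoint_left, mem_giveItems]
    rintro t (⟨-, rfl⟩ | hti) (⟨-, htj⟩ | htj)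
    · exact hij (a.injective (Subtype.ext htj))
    · exact hB.notMem _ _ htj
    · exact hB.notMem _ _ (htj ▸ hti)
    · exact disjoint_left.mp (hB.pairwise_disjoint i j hij) hti htj
  disjoint i := by
    simp only [disjoint_left, mem_giveItems, mem_leftover]
    rintro t (⟨hi, rfl⟩ | hti) ⟨htY, hta⟩
    · exact hta i hi rfl
    · exact hB.notMem ⟨t, htY⟩ i hti
  biUnion_union := by
    rw [← hB.biUnion_union]
    ext t
    simp only [mem_union, mem_biUnion, mem_univ, true_and, mem_giveItems, mem_leftover]
    grind

lemma sum_sum_giveItems [AddCommMonoid R] (hBY : ∀ i, Disjoint (B i) Y) (w : α → ι → R) :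
    ∑ i, ∑ t ∈ giveItems H a B i, w i t =
      ∑ i ∈ H, w i (a i) + ∑ i, ∑ t ∈ B i, w i t := by
  simp only [sum_giveItems hBY, sum_add_distrib, sum_ite_mem, univ_inter]

end Bundles

section Merge

variable {ι κ α R : Type*} [DecidableEq ι] [Fintype κ] [DecidableEq α] {S Y : Finset ι}
  {M : κ → Finset ι}

/-- The bundle of each agent when agent `h s` owns the whole of `M s`. -/
def mergeByOwner (h : κ → α) (M : κ → Finset ι) (i : α) : Finset ι :=
  (univ.filter fun s => h s = i).biUnion M

lemma disjoint_mergeByOwner (hMY : ∀ s, Disjoint (M s) Y) (h : κ → α) (i : α) :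
    Disjoint (mergeByOwner h M i) Y :=
  (disjoint_biUnion_left _ _ _).mpr fun s _ => hMY s

protected lemma IsPartialPartition.mergeByOwner [Fintype α] (hM : IsPartialPartition S M Y)
    (h : κ → α) : IsPartialPartition S (mergeByOwner h M) Y where
  pairwise_disjoint i j hij := by
    simp only [mergeByOwner, disjoint_biUnion_left, disjoint_biUnion_right, mem_filter,
      mem_univ, true_and]
    rintro r rfl s rfl
    exact hM.pairwise_disjoint s r (ne_of_apply_ne h hij)
  disjoint := disjoint_mergeByOwner hM.disjoint h
  biUnion_union := by
    rw [← hM.biUnion_union]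
    ext t
    simp [mergeByOwner]

lemma IsPartialPartition.sum_mergeByOwner [AddCommMonoid R] (hM : IsPartialPartition S M Y)
    (h : κ → α) (f : ι → R) (i : α) :
    ∑ t ∈ mergeByOwner h M i, f t = ∑ s with h s = i, ∑ t ∈ M s, f t :=
  sum_biUnion fun r _ s _ => hM.pairwise_disjoint r s

lemma IsPartialPartition.sum_sum_mergeByOwner [Fintype α] [AddCommMonoid R]
    (hM : IsPartialPartition S M Y) (h : κ → α) (w : α → ι → R) :
    ∑ i, ∑ t ∈ mergeByOwner h M i, w i t = ∑ s, ∑ t ∈ M s, w (h s) t := by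
  rw [← sum_fiberwise univ h]
  refine sum_congr rfl fun i _ => (hM.sum_mergeByOwner h (w i) i).trans ?_
  refine sum_congr rfl fun s hs => ?_
  rw [(mem_filter.mp hs).2]

end Merge

section Fairness

variable {ι α K : Type*} [AddCommGroup K] [LinearOrder K] {u : α → ι → K}
  {A : α → Finset ι}

/-- Envy-freeness up to one item, which may be a chore of the envious agent or a good of the envied
one. -/
def IsEF1 [DecidableEq ι] (u : α → ι → K) (A : α → Finset ι) : Prop :=
  ∀ i j, (∑ t ∈ A i, u i t) ≥ (∑ t ∈ A j, u i t) ∨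
    ∃ t ∈ A i ∪ A j, (∑ s ∈ (A i).erase t, u i s) ≥ ∑ s ∈ (A j).erase t, u i s

/-- Nonnegative payments to the agents can eliminate all envy. -/
def IsEnvyFreeable (u : α → ι → K) (A : α → Finset ι) : Prop :=
  ∃ p : α → K, (∀ i, 0 ≤ p i) ∧ ∀ i j, (∑ t ∈ A i, u i t) + p i ≥ (∑ t ∈ A j, u i t) + p j

/-- No permutation of the bundles among the agents increases the total utility. -/
def IsReassignmentStable [Fintype α] (u : α → ι → K) (A : α → Finset ι) : Prop :=
  ∀ σ : Equiv.Perm α, ∑ i, ∑ t ∈ A i, u (σ i) t ≤ ∑ i, ∑ t ∈ A i, u i t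

theorem IsReassignmentStable.isEnvyFreeable [Fintype α] [IsOrderedAddMonoid K]
    (hA : IsReassignmentStable u A) : IsEnvyFreeable u A := by
  have hperm (σ : Equiv.Perm α) : ∑ i, (∑ t ∈ A (σ i), u i t - ∑ t ∈ A i, u i t) ≤ 0 := by
    have hσ : ∑ i, ∑ t ∈ A (σ i), u i t = ∑ j, ∑ t ∈ A j, u (σ.symm j) t := by
      simp [← Equiv.sum_comp σ fun j => ∑ t ∈ A j, u (σ.symm j) t]
    rw [sum_sub_distrib, hσ]
    exact sub_nonpos.mpr (hA σ.symm)
  obtain ⟨p, hp0, hp⟩ := exists_potential_of_sum_perm_nonpos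
    (w := fun i j => ∑ t ∈ A j, u i t - ∑ t ∈ A i, u i t) (fun _ => sub_self _) hperm
  exact ⟨p, hp0, fun i j => by
    simpa only [sub_add_eq_add_sub, sub_le_iff_le_add'] using hp i j⟩

end Fairness

section Rounds

variable {ι α K : Type*} [DecidableEq ι] [Fintype α] [AddCommGroup K] [LinearOrder K]
  {u : α → ι → K} {S Y : Finset ι} {B : α → Finset ι}

/-- The invariant of the rounds: a partial allocation `B` of `S`, stable under permuting the
bundles, in which any item of the rest `Y`, added to a bundle, removes all envy towards it. -/
structure IsRoundReady (u : α → ι → K) (S : Finset ι) (B : α → Finset ι) (Y : Finset ι) : Prop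
    extends IsPartialPartition S B Y where
  stable : IsReassignmentStable u B
  add_le : ∀ i j, ∀ c ∈ Y, u i c + ∑ t ∈ B j, u i t ≤ ∑ t ∈ B i, u i t

lemma IsRoundReady.isEF1_giveItems [DecidableEq α] (hB : IsRoundReady u S B Y) (a : α ↪ Y) :
    IsEF1 u (giveItems univ a B) := by
  intro i j
  rcases eq_or_ne i j with rfl | hij
  · exact .inl le_rfl
  have hi : (a i : ι) ∈ giveItems univ a B i := mem_giveItems.mpr (.inl ⟨mem_univ i, rfl⟩)
  have hj : (a i : ι) ∉ giveItems univ a B j :=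
    disjoint_left.mp ((hB.toIsPartialPartition.giveItems univ a).pairwise_disjoint i j hij) hi
  have herase : (giveItems univ a B i).erase (a i) = B i := by
    simp [giveItems, erase_insert (hB.notMem (a i) i)]
  refine .inr ⟨a i, mem_union_left _ hi, ?_⟩
  rw [herase, erase_eq_of_notMem hj, sum_giveItems hB.disjoint, if_pos (mem_univ j)]
  exact hB.add_le i j (a j) (a j).2

variable [IsOrderedAddMonoid K]

protected lemma IsRoundReady.giveItems [DecidableEq α] (hB : IsRoundReady u S B Y)
    {a : α ↪ Y} (ha : ∀ e : α ↪ Y, ∑ i, u i (e i) ≤ ∑ i, u i (a i)) :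
    IsRoundReady u S (giveItems univ a B) (leftover univ a) where
  toIsPartialPartition := hB.toIsPartialPartition.giveItems univ a
  stable σ := by
    have hσ : ∑ i, u (σ i) (a i) ≤ ∑ i, u i (a i) := by
      simpa [← Equiv.sum_comp σ fun i => u i (a (σ.symm i))] using ha (σ.symm.toEmbedding.trans a)
    rw [sum_sum_giveItems hB.disjoint fun i => u (σ i), sum_sum_giveItems hB.disjoint u]
    exact add_le_add hσ (hB.stable σ)
  add_le i j c hc := by
    obtain ⟨hcY, hca⟩ := mem_leftover.mp hc
    have hc_le : u i c ≤ u i (a i) :=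
      le_of_forall_embedding_sum_le (w := fun k (d : Y) => u k d) (c := ⟨c, hcY⟩) ha (mem_univ i)
        fun k hk => Subtype.coe_ne_coe.mp (hca k hk)
    rw [sum_giveItems hB.disjoint, sum_giveItems hB.disjoint, if_pos (mem_univ i),
      if_pos (mem_univ j)]
    exact add_le_add hc_le (hB.add_le i j (a j) (a j).2)

theorem IsRoundReady.exists_allocation {q : ℕ} (hB : IsRoundReady u S B Y)
    (hEF1 : Y = ∅ → IsEF1 u B) (hq : Y.card = q * Fintype.card α) :
    ∃ A : α → Finset ι, IsPartialPartition S A ∅ ∧ IsEF1 u A ∧ IsEnvyFreeable u A := by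
  classical
  induction q generalizing B Y with
  | zero =>
    obtain rfl : Y = ∅ := card_eq_zero.mp (by simpa using hq)
    exact ⟨B, hB.toIsPartialPartition, hEF1 rfl, hB.stable.isEnvyFreeable⟩
  | succ q ih =>
    rw [add_one_mul] at hq
    obtain ⟨a, ha⟩ := exists_embedding_forall_sum_le (fun i (c : Y) => u i c)
      (by simp [hq])
    refine ih (hB.giveItems ha) (fun _ => hB.isEF1_giveItems a) ?_
    rw [card_leftover, hq, card_univ, Nat.add_sub_cancel]

end Rounds

section FirstRound

variable {ι κ α K : Type*} [Fintype κ] [AddCommGroup K] [LinearOrder K] {u : α → ι → K}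
  {S Z : Finset ι} {M : κ → Finset ι} {H : Finset α} {a : α ↪ Z} {h : κ → α}

/-- The total utility when each agent `i ∈ H` receives the chore `a i` and each bundle `M s` goes
to the agent of `H` valuing it most, or to nobody if all of `H` value it negatively. -/
def firstRoundScore (u : α → ι → K) (M : κ → Finset ι) (H : Finset α) (a : α ↪ Z) : K :=
  ∑ i ∈ H, u i (a i) + ∑ s, H.fold max 0 fun i => ∑ t ∈ M s, u i t

lemma exists_firstRoundScore_max [Fintype α] (u : α → ι → K) (M : κ → Finset ι) {r : ℕ}
    (hr : r ≤ Fintype.card α) (hZ : Fintype.card α ≤ Z.card) :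
    ∃ (H : Finset α) (a : α ↪ Z), H.card = r ∧ ∀ (H' : Finset α) (e : α ↪ Z), H'.card = r →
      firstRoundScore u M H' e ≤ firstRoundScore u M H a := by
  obtain ⟨e₀⟩ : Nonempty (α ↪ Z) := Function.Embedding.nonempty_of_card_le (by simpa using hZ)
  obtain ⟨H₀, -, hH₀⟩ := exists_subset_card_eq (s := (univ : Finset α)) hr
  obtain ⟨⟨H, a⟩, hH, hmax⟩ := Set.exists_max_image {x : Finset α × (α ↪ Z) | x.1.card = r}
    (fun x => firstRoundScore u M x.1 x.2) (Set.toFinite _) ⟨(H₀, e₀), hH₀⟩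
  exact ⟨H, a, hH, fun H' e hH' => hmax (H', e) hH'⟩

variable [DecidableEq ι] [IsOrderedAddMonoid K]

lemma isReassignmentStable_firstRound [Fintype α] [DecidableEq α] (hM : IsPartialPartition S M Z)
    (howner : ∀ s (σ : Equiv.Perm α),
      ∑ t ∈ M s, u (σ (h s)) t + H.fold max 0 (fun i => ∑ t ∈ M s, u i t) ≤
        ∑ t ∈ M s, u (h s) t + (H.map σ.toEmbedding).fold max 0 fun i => ∑ t ∈ M s, u i t)
    (hmax : ∀ (H' : Finset α) (e : α ↪ Z), H'.card = H.card →
      firstRoundScore u M H' e ≤ firstRoundScore u M H a) :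
    IsReassignmentStable u (giveItems H a (mergeByOwner h M)) := by
  intro σ
  have hscore := hmax (H.map σ.toEmbedding) (σ.symm.toEmbedding.trans a) (card_map _)
  simp only [firstRoundScore, sum_map, Equiv.coe_toEmbedding, Function.Embedding.trans_apply,
    Equiv.symm_apply_apply] at hscore
  have hmeta := sum_le_sum fun s (_ : s ∈ univ) => howner s σ
  simp only [sum_add_distrib] at hmeta
  have hD := disjoint_mergeByOwner hM.disjoint h
  rw [sum_sum_giveItems hD fun i => u (σ i), sum_sum_giveItems hD u,
    hM.sum_sum_mergeByOwner h fun i => u (σ i), hM.sum_sum_mergeByOwner h u]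
  grind

lemma add_sum_le_firstRound [DecidableEq α] (hM : IsPartialPartition S M Z)
    (hneg : ∀ i, ∀ c ∈ Z, ∀ P : Finset κ, ∑ s ∈ P, ∑ t ∈ M s, u i t + u i c ≤ 0)
    (hown : ∀ s, 0 ≤ ∑ t ∈ M s, u (h s) t)
    (hH : ∀ s, h s ∉ H → ∀ i ∈ H, ∑ t ∈ M s, u i t ≤ 0)
    (ha : ∀ i ∈ H, ∀ c ∈ leftover H a, u i c ≤ u i (a i))
    (i j : α) {c : ι} (hc : c ∈ leftover H a) :
    u i c + ∑ t ∈ giveItems H a (mergeByOwner h M) j, u i t ≤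
      ∑ t ∈ giveItems H a (mergeByOwner h M) i, u i t := by
  have hD := disjoint_mergeByOwner hM.disjoint h
  have hcZ := (mem_leftover.mp hc).1
  have haj : u i (a j) ≤ 0 := by simpa using hneg i (a j) (a j).2 ∅
  have hi : 0 ≤ ∑ s with h s = i, ∑ t ∈ M s, u i t :=
    sum_nonneg fun s hs => by simpa [(mem_filter.mp hs).2] using hown s
  have hjc := hneg i c hcZ {s | h s = j}
  have hjaj := hneg i (a j) (a j).2 {s | h s = j}
  rw [sum_giveItems hD, sum_giveItems hD, hM.sum_mergeByOwner, hM.sum_mergeByOwner]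
  by_cases hiH : i ∈ H
  · have hcai := ha i hiH c hc
    by_cases hjH : j ∈ H
    · rw [if_pos hiH, if_pos hjH]
      grind
    · have hj : ∑ s with h s = j, ∑ t ∈ M s, u i t ≤ 0 :=
        sum_nonpos fun s hs => hH s ((mem_filter.mp hs).2 ▸ hjH) i hiH
      rw [if_pos hiH, if_neg hjH]
      grind
  · rw [if_neg hiH]
    split_ifs <;> grind

theorem exists_isRoundReady [Fintype α] (hM : IsPartialPartition S M Z)
    (hsupp : ∀ s, ∃ i, 0 ≤ ∑ t ∈ M s, u i t)
    (hneg : ∀ i, ∀ c ∈ Z, ∀ P : Finset κ, ∑ s ∈ P, ∑ t ∈ M s, u i t + u i c ≤ 0)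
    {r : ℕ} (hr : r ≤ Fintype.card α) (hZ : Fintype.card α ≤ Z.card) :
    ∃ B Y, IsRoundReady u S B Y ∧ Y.card = Z.card - r := by
  classical
  obtain ⟨H, a, rfl, hmax⟩ := exists_firstRoundScore_max u M hr hZ
  choose h hown hH howner using fun s => exists_owner (hsupp s) H
  have ha (i) (hi : i ∈ H) (c) (hc : c ∈ leftover H a) : u i c ≤ u i (a i) := by
    obtain ⟨hcZ, hca⟩ := mem_leftover.mp hc
    exact le_of_forall_embedding_sum_le (w := fun k (d : Z) => u k d) (c := ⟨c, hcZ⟩)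
      (fun e => le_of_add_le_add_right (hmax H e rfl)) hi
      fun k hk => Subtype.coe_ne_coe.mp (hca k hk)
  exact ⟨giveItems H a (mergeByOwner h M), leftover H a,
    { toIsPartialPartition := (hM.mergeByOwner h).giveItems H a
      stable := isReassignmentStable_firstRound hM howner hmax
      add_le := fun i j _ hc => add_sum_le_firstRound hM hneg hown hH ha i j hc },
    card_leftover H a⟩

end FirstRound

end FairDivision

open FairDivision in
theorem ef1_envy_freeable_case_many_chores_general {ι κ α K : Type*} [DecidableEq ι] [Fintype κ]
    [Fintype α] [Nonempty α] [AddCommGroup K] [LinearOrder K] [IsOrderedAddMonoid K]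
    {u : α → ι → K} {S Z : Finset ι} {M : κ → Finset ι} (hM : IsPartialPartition S M Z)
    (hsupp : ∀ s, ∃ i, 0 ≤ ∑ t ∈ M s, u i t)
    (hneg : ∀ i, ∀ c ∈ Z, ∀ P : Finset κ, ∑ s ∈ P, ∑ t ∈ M s, u i t + u i c ≤ 0)
    (hZ : Fintype.card α ≤ Z.card) :
    ∃ A : α → Finset ι, IsPartialPartition S A ∅ ∧ IsEF1 u A ∧ IsEnvyFreeable u A := by
  have hα : 0 < Fintype.card α := Fintype.card_pos
  obtain ⟨B, Y, hB, hY⟩ := exists_isRoundReady hM hsupp hneg (Nat.mod_lt Z.card hα).le hZ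
  have hYcard : Y.card = Z.card / Fintype.card α * Fintype.card α := by
    rw [hY, mul_comm]
    exact Nat.sub_eq_of_eq_add (Nat.div_add_mod _ _).symm
  have hYpos : 0 < Y.card := hYcard ▸ Nat.mul_pos (Nat.div_pos hZ hα) hα
  exact hB.exists_allocation (fun hempty => absurd hempty (Finset.card_pos.mp hYpos).ne_empty)
    hYcard

/-- Case I: If the item set is partitioned into pairwise disjoint
chore-maximal meta-goods `M_1, …, M_ℓ` with pairwise disjoint supporter sets, together with a
set `Z` of objective chores with `|Z| ≥ n`, then an EF1 and envy-freeable allocation of the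
items exists. -/
theorem ef1_envy_freeable_case_many_chores
    (n : ℕ) (hn : 0 < n) (I : Type) [Fintype I] [DecidableEq I]
    (u : Fin n → I → ℝ)
    (ℓ : ℕ) (Ms : Fin ℓ → Finset I) (Z : Finset I)
    -- meta-goods: nonempty, each valued nonnegatively by some agent
    (hMs_ne : ∀ j, (Ms j).Nonempty)
    (hMs_meta : ∀ j, ∃ i : Fin n, 0 ≤ ∑ t ∈ Ms j, u i t)
    -- the meta-goods together with Z partition the item set
    (hMs_disj : ∀ j k, j ≠ k → Disjoint (Ms j) (Ms k))
    (hMsZ_disj : ∀ j, Disjoint (Ms j) Z)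
    (hcover : Finset.univ.biUnion Ms ∪ Z = Finset.univ)
    -- Z consists of objective chores, at least n of them
    (hZ_chores : ∀ c ∈ Z, ∀ i : Fin n, u i c < 0)
    (hZ_card : n ≤ Z.card)
    -- each M_j is chore-maximal
    (hChoreMax : ∀ j, ∀ c : I, (∀ i : Fin n, u i c < 0) → c ∉ Ms j →
      ∀ i : Fin n, (∑ t ∈ insert c (Ms j), u i t) < 0)
    -- the supporter sets are pairwise disjoint
    (hSupp : ∀ j k, j ≠ k → ∀ i : Fin n,
      0 ≤ (∑ t ∈ Ms j, u i t) → ¬ (0 ≤ ∑ t ∈ Ms k, u i t)) :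
    ∃ A : Fin n → Finset I,
      (∀ i j, i ≠ j → Disjoint (A i) (A j)) ∧
      (Finset.univ.biUnion A = Finset.univ) ∧
      -- EF1
      (∀ i j : Fin n,
        (∑ t ∈ A i, u i t) ≥ (∑ t ∈ A j, u i t) ∨
          ∃ t ∈ A i ∪ A j,
            (∑ s ∈ (A i).erase t, u i s) ≥ ∑ s ∈ (A j).erase t, u i s) ∧
      -- envy-freeable
      (∃ p : Fin n → ℝ, (∀ i, 0 ≤ p i) ∧
        ∀ i j : Fin n, (∑ t ∈ A i, u i t) + p i ≥ (∑ t ∈ A j, u i t) + p j) := by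
  have : Nonempty (Fin n) := ⟨⟨0, hn⟩⟩
  have hM : FairDivision.IsPartialPartition Finset.univ Ms Z := ⟨hMs_disj, hMsZ_disj, hcover⟩
  obtain ⟨A, hA, hEF1, hEF⟩ := ef1_envy_freeable_case_many_chores_general hM hMs_meta
    (fun i c hc => FairDivision.sum_add_nonpos_of_insert_nonpos (hM.notMem ⟨c, hc⟩)
      (hZ_chores c hc i).le
      (fun s => (hChoreMax s c (hZ_chores c hc) (hM.notMem ⟨c, hc⟩ s) i).le)
      fun r s hrs hr => (not_le.mp (hSupp r s hrs i hr)).le)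
    (by simpa using hZ_card)
  exact ⟨A, hA.pairwise_disjoint, by simpa using hA.biUnion_union, hEF1, hEF⟩
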